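/- Let 2 < s < ∞ and set r₁ = 2s/(s+2), so 1 < r₁ < 2. Let b : ℂ → ℂ be measurable with b ∈ L^{r₁}(ℂ) and b ∈ L^{r₂}(ℂ) for some r₂ with 2 < r₂ < ∞ (Lebesgue measure on ℂ). Then there exists exactly one (up to almost-everywhere equality) function u ∈ L^s(ℂ) such that for almost every k ∈ ℂ the function k' ↦ b(k')·(1 + conj(u(k')))/(k − k') is integrable and u(k) = (1/π)∫_ℂ b(k')·(1 + conj(u(k')))/(k − k') dμ(k'). -/

import Mathlib

open MeasureTheory Complex

/-!
Write `C` for the Cauchy transform. Hölder's inequality near and far from the pole makes the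
potential of `|b|` bounded, and the Hardy–Littlewood–Sobolev inequality sends `L^{r₁}` to `L^s`;
the latter follows from truncating in height and distance at a level `l` and optimizing over `l`.

The similarity principle gives an a priori bound: if `y = C(B * conj y + f)` and
`β = B * conj y / y`, then `y * exp (-C β) = C (f * exp (-C β))`. It rests on the identity
`C f * C g = C (f * C g) + C (g * C f)`, which is the partial fraction decomposition of the kernel
and which yields `C (-β * exp (-C β)) = exp (-C β) - 1` by power series. With `f = 0` the bound is
uniqueness; applied to `t * B`, `0 ≤ t ≤ 1`, it drives the method of continuity in `L^∞`, which
produces `v = 1 + C (B * conj v)` and the solution `u = v - 1`.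
-/

open scoped ENNReal NNReal

section RieszPotential

open Module

variable {E : Type*} [NormedAddCommGroup E]

/-- The Riesz potential `∫ f(y) |x - y|^{-a} dμ(y)` of a nonnegative function, without the customary
normalizing constant. -/
noncomputable def rieszPotential [MeasurableSpace E] (μ : Measure E) (a : ℝ) (f : E → ℝ≥0∞)
    (x : E) : ℝ≥0∞ :=
  ∫⁻ y, f y * ‖x - y‖ₑ ^ (-a) ∂μ

lemma lintegral_mul_le_add_truncation {α : Type*} [MeasurableSpace α] {μ : Measure α} {S : Set α}
    (hS : MeasurableSet S) {g : α → ℝ≥0∞} (hg : Measurable g) (f : α → ℝ≥0∞) (t : ℝ≥0∞) :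
    ∫⁻ y, f y * g y ∂μ ≤ (∫⁻ y in Sᶜ, f y * g y ∂μ) + t * (∫⁻ y in S, g y ∂μ) +
      ∫⁻ y in S, {y | t < f y}.indicator (fun y => f y * g y) y ∂μ := by
  have split_height : ∫⁻ y in S, f y * g y ∂μ ≤ t * (∫⁻ y in S, g y ∂μ) +
      ∫⁻ y in S, {y | t < f y}.indicator (fun y => f y * g y) y ∂μ := by
    rw [← lintegral_const_mul t hg, ← lintegral_add_left (hg.const_mul t)]
    refine lintegral_mono fun y => ?_
    by_cases hy : t < f y
    · simp [hy]
    · simpa [hy] using mul_le_mul_left (not_lt.1 hy) (g y)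
  rw [← lintegral_add_compl _ hS, add_comm, add_assoc]
  gcongr

variable [MeasurableSpace E] [BorelSpace E] [NormedSpace ℝ E] [FiniteDimensional ℝ E]
  {μ : Measure E} [μ.IsAddHaarMeasure]

lemma lintegral_comp_mul_enorm (g : ℝ≥0∞ → ℝ≥0∞) {r : ℝ≥0∞} (hr0 : r ≠ 0) (hr : r ≠ ∞) :
    ∫⁻ z : E, g (r * ‖z‖ₑ) ∂μ = r ^ (-(finrank ℝ E : ℝ)) * ∫⁻ z : E, g ‖z‖ₑ ∂μ := by
  lift r to ℝ≥0 using hr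
  have hr0 : (r : ℝ) ≠ 0 := by simpa using hr0
  let e : E ≃ᵐ E := (Homeomorph.smulOfNeZero (r : ℝ) hr0).toMeasurableEquiv
  have enorm_dilation (z : E) : (r : ℝ≥0∞) * ‖z‖ₑ = ‖e z‖ₑ := by
    change _ = ‖(r : ℝ) • z‖ₑ
    simp [enorm_smul, Real.enorm_eq_ofReal]
  have map_dilation : μ.map e = ((r : ℝ≥0∞) ^ (-(finrank ℝ E : ℝ))) • μ := by
    refine (Measure.map_addHaar_smul μ hr0).trans ?_
    congr 1
    rw [abs_of_nonneg (by positivity), ENNReal.rpow_neg, ENNReal.rpow_natCast,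
      ENNReal.ofReal_inv_of_pos (by positivity), ENNReal.ofReal_pow r.coe_nonneg,
      ENNReal.ofReal_coe_nnreal]
  simp only [enorm_dilation]
  rw [← lintegral_map_equiv (fun z => g ‖z‖ₑ) e, map_dilation, lintegral_smul_measure, smul_eq_mul]

lemma setLIntegral_mul_enorm_mem {T : Set ℝ≥0∞} (hT : MeasurableSet T) (a : ℝ) {r : ℝ≥0∞}
    (hr0 : r ≠ 0) (hr : r ≠ ∞) :
    ∫⁻ z in {z : E | r * ‖z‖ₑ ∈ T}, ‖z‖ₑ ^ (-a) ∂μ =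
      r ^ (a - finrank ℝ E) * ∫⁻ z in {z : E | ‖z‖ₑ ∈ T}, ‖z‖ₑ ^ (-a) ∂μ := by
  have rescale (z : E) : ‖z‖ₑ ^ (-a) = r ^ a * (r * ‖z‖ₑ) ^ (-a) := by
    rw [ENNReal.mul_rpow_of_ne_top hr enorm_ne_top, ← mul_assoc, ← ENNReal.rpow_add _ _ hr0 hr,
      add_neg_cancel, ENNReal.rpow_zero, one_mul]
  have hT1 : MeasurableSet {z : E | ‖z‖ₑ ∈ T} := measurable_enorm hT
  have hTr : MeasurableSet {z : E | r * ‖z‖ₑ ∈ T} := (measurable_enorm.const_mul r) hT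
  calc ∫⁻ z in {z : E | r * ‖z‖ₑ ∈ T}, ‖z‖ₑ ^ (-a) ∂μ
      = ∫⁻ z in {z : E | r * ‖z‖ₑ ∈ T}, r ^ a * (r * ‖z‖ₑ) ^ (-a) ∂μ := by simp only [← rescale]
    _ = r ^ a * ∫⁻ z : E, T.indicator (· ^ (-a)) (r * ‖z‖ₑ) ∂μ := by
        rw [lintegral_const_mul _ (by fun_prop), ← lintegral_indicator hTr]
        rfl
    _ = r ^ (a - finrank ℝ E) * ∫⁻ z in {z : E | ‖z‖ₑ ∈ T}, ‖z‖ₑ ^ (-a) ∂μ := by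
        rw [lintegral_comp_mul_enorm _ hr0 hr, ← mul_assoc, ← ENNReal.rpow_add _ _ hr0 hr,
          ← sub_eq_add_neg, ← lintegral_indicator hT1]
        rfl

lemma setLIntegral_enorm_lt_one_rpow_neg_lt_top [Nontrivial E] {a : ℝ} (ha : a < finrank ℝ E) :
    ∫⁻ z in {z : E | ‖z‖ₑ < 1}, ‖z‖ₑ ^ (-a) ∂μ < ∞ := by
  have unit_ball : {z : E | ‖z‖ₑ < 1} = Metric.ball 0 1 := by
    ext z; simp [← toReal_enorm, ← ENNReal.toReal_lt_toReal]
  have integrable : IntegrableOn (fun z : E => ‖z‖ ^ (-a)) (Metric.ball 0 1) μ :=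
    integrableOn_ball_of_norm_le_rpow (C := 1) finrank_pos ha
      (.of_forall fun z => by rw [one_mul, Real.norm_of_nonneg (by positivity)])
      (Measurable.aestronglyMeasurable (by fun_prop))
  have ne_zero : ∀ᵐ z : E ∂μ.restrict (Metric.ball 0 1), z ≠ 0 :=
    ae_restrict_of_ae (Measure.ae_ne μ 0)
  rw [unit_ball]
  refine (lintegral_congr_ae ?_).trans_lt integrable.lintegral_lt_top
  filter_upwards [ne_zero] with z hz
  rw [← ofReal_norm, ENNReal.ofReal_rpow_of_pos (norm_pos_iff.2 hz)]

lemma setLIntegral_one_le_enorm_rpow_neg_lt_top {a : ℝ} (ha : finrank ℝ E < a) :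
    ∫⁻ z in {z : E | 1 ≤ ‖z‖ₑ}, ‖z‖ₑ ^ (-a) ∂μ < ∞ := by
  have ha0 : 0 < a := (Nat.cast_nonneg _).trans_lt ha
  have compare (z : E) (hz : 1 ≤ ‖z‖ₑ) :
      ‖z‖ₑ ^ (-a) ≤ ENNReal.ofReal (2 ^ a) * ENNReal.ofReal ((1 + ‖z‖) ^ (-a)) := by
    have hz : 1 ≤ ‖z‖ := by simpa [← toReal_enorm] using ENNReal.toReal_mono enorm_ne_top hz
    have hz0 : 0 < ‖z‖ := one_pos.trans_le hz
    rw [← ofReal_norm, ENNReal.ofReal_rpow_of_pos hz0, ← ENNReal.ofReal_mul (by positivity)]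
    refine ENNReal.ofReal_le_ofReal ?_
    calc ‖z‖ ^ (-a) = 2 ^ a * (2 * ‖z‖) ^ (-a) := by
          rw [Real.mul_rpow two_pos.le hz0.le, ← mul_assoc, ← Real.rpow_add two_pos]; simp
      _ ≤ 2 ^ a * (1 + ‖z‖) ^ (-a) := by
          gcongr 2 ^ a * ?_
          exact Real.rpow_le_rpow_of_nonpos (by positivity) (by linarith) (neg_nonpos.2 ha0.le)
  calc ∫⁻ z in {z : E | 1 ≤ ‖z‖ₑ}, ‖z‖ₑ ^ (-a) ∂μ
      ≤ ∫⁻ z in {z : E | 1 ≤ ‖z‖ₑ}, ENNReal.ofReal (2 ^ a) * ENNReal.ofReal ((1 + ‖z‖) ^ (-a)) ∂μ :=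
        setLIntegral_mono' (measurableSet_le measurable_const measurable_enorm) compare
    _ ≤ ENNReal.ofReal (2 ^ a) * ∫⁻ z : E, ENNReal.ofReal ((1 + ‖z‖) ^ (-a)) ∂μ := by
        rw [← lintegral_const_mul' _ _ ENNReal.ofReal_ne_top]
        exact setLIntegral_le_lintegral _ _
    _ < ∞ := ENNReal.mul_lt_top ENNReal.ofReal_lt_top (finite_integral_one_add_norm ha)

lemma setLIntegral_mul_rpow_neg_le {p q : ℝ} (hpq : p.HolderConjugate q) {f : E → ℝ≥0∞}
    (hf : AEMeasurable f μ) (a : ℝ) (x : E) {T : Set E} (hT : MeasurableSet T) :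
    ∫⁻ y in {y | x - y ∈ T}, f y * ‖x - y‖ₑ ^ (-a) ∂μ ≤
      (∫⁻ y, f y ^ p ∂μ) ^ p⁻¹ * (∫⁻ z in T, ‖z‖ₑ ^ (-(a * q)) ∂μ) ^ q⁻¹ := by
  have hTx : MeasurableSet {y | x - y ∈ T} := (measurable_const.sub measurable_id) hT
  have kernel_integral : ∫⁻ y in {y | x - y ∈ T}, (‖x - y‖ₑ ^ (-a)) ^ q ∂μ =
      ∫⁻ z in T, ‖z‖ₑ ^ (-(a * q)) ∂μ := by
    simp only [← ENNReal.rpow_mul, neg_mul]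
    rw [← lintegral_indicator hTx, ← lintegral_indicator hT,
      ← lintegral_sub_left_eq_self (T.indicator fun z => ‖z‖ₑ ^ (-(a * q))) x]
    rfl
  calc ∫⁻ y in {y | x - y ∈ T}, f y * ‖x - y‖ₑ ^ (-a) ∂μ
      ≤ (∫⁻ y in {y | x - y ∈ T}, f y ^ p ∂μ) ^ (1 / p) *
          (∫⁻ y in {y | x - y ∈ T}, (‖x - y‖ₑ ^ (-a)) ^ q ∂μ) ^ (1 / q) :=
        ENNReal.lintegral_mul_le_Lp_mul_Lq _ hpq hf.restrict (by fun_prop)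
    _ ≤ (∫⁻ y, f y ^ p ∂μ) ^ p⁻¹ * (∫⁻ z in T, ‖z‖ₑ ^ (-(a * q)) ∂μ) ^ q⁻¹ := by
        rw [kernel_integral, one_div, one_div]
        have := hpq.pos
        gcongr
        exact Measure.restrict_le_self

lemma exists_rieszPotential_le [Nontrivial E] {a p p' q q' : ℝ} (hp : p.HolderConjugate p')
    (hq : q.HolderConjugate q') (hap : finrank ℝ E < a * p') (haq : a * q' < finrank ℝ E)
    {f : E → ℝ≥0∞} (hf : AEMeasurable f μ) (hfp : ∫⁻ y, f y ^ p ∂μ ≠ ∞)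
    (hfq : ∫⁻ y, f y ^ q ∂μ ≠ ∞) : ∃ M : ℝ≥0, ∀ x, rieszPotential μ a f x ≤ M := by
  let near : Set E := {z | ‖z‖ₑ < 1}
  let far : Set E := {z | 1 ≤ ‖z‖ₑ}
  have near_measurable : MeasurableSet near := measurableSet_lt measurable_enorm measurable_const
  have far_measurable : MeasurableSet far := measurableSet_le measurable_const measurable_enorm
  let bound := (∫⁻ y, f y ^ q ∂μ) ^ q⁻¹ * (∫⁻ z in near, ‖z‖ₑ ^ (-(a * q')) ∂μ) ^ q'⁻¹ +
    (∫⁻ y, f y ^ p ∂μ) ^ p⁻¹ * (∫⁻ z in far, ‖z‖ₑ ^ (-(a * p')) ∂μ) ^ p'⁻¹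
  have bound_ne_top : bound ≠ ∞ := by
    have rpow_inv_ne_top {c : ℝ≥0∞} {e : ℝ} (hc : c ≠ ∞) (he : 0 < e) : c ^ e⁻¹ ≠ ∞ :=
      ENNReal.rpow_ne_top_of_nonneg (inv_nonneg.2 he.le) hc
    exact ENNReal.add_ne_top.2
      ⟨ENNReal.mul_ne_top (rpow_inv_ne_top hfq hq.pos)
        (rpow_inv_ne_top (setLIntegral_enorm_lt_one_rpow_neg_lt_top haq).ne hq.symm.pos),
      ENNReal.mul_ne_top (rpow_inv_ne_top hfp hp.pos)
        (rpow_inv_ne_top (setLIntegral_one_le_enorm_rpow_neg_lt_top hap).ne hp.symm.pos)⟩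
  refine ⟨bound.toNNReal, fun x => ?_⟩
  have near_x_measurable : MeasurableSet {y | x - y ∈ near} :=
    (measurable_const.sub measurable_id) near_measurable
  have compl_near : {y | x - y ∈ near}ᶜ = {y | x - y ∈ far} := by ext y; simp [near, far]
  rw [ENNReal.coe_toNNReal bound_ne_top, rieszPotential, ← lintegral_add_compl _ near_x_measurable,
    compl_near]
  exact add_le_add (setLIntegral_mul_rpow_neg_le hq hf a x near_measurable)
    (setLIntegral_mul_rpow_neg_le hp hf a x far_measurable)

lemma rpow_le_of_forall_rpow_sub_one_mul_le {K V W : ℝ≥0∞} {s : ℝ} (hs : 1 < s) (hK : K ≠ ∞)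
    (h : ∀ l : ℝ≥0∞, l ≠ 0 → l ≠ ∞ → l ^ (s - 1) * V ≤ K * l ^ s + W) :
    V ^ s ≤ 2 * (2 * (K + 1)) ^ (s - 1) * W := by
  have hs1 : 0 ≤ s - 1 := sub_nonneg.2 hs.le
  have rpow_split (v : ℝ≥0∞) : v ^ s = v ^ (s - 1) * v := by
    conv_lhs => rw [← sub_add_cancel s 1, ENNReal.rpow_add_of_nonneg _ _ hs1 zero_le_one,
      ENNReal.rpow_one]
  let L := 2 * (K + 1)
  have hL0 : L ≠ 0 := by simp [L]
  have hL : L ≠ ∞ := by simp [L, ENNReal.mul_eq_top, hK]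
  obtain rfl | hV0 := eq_or_ne V 0
  · simp [ENNReal.zero_rpow_of_pos (one_pos.trans hs)]
  obtain rfl | hV := eq_or_ne V ∞
  · have hW : W = ∞ := by simpa [hK] using h 1 one_ne_zero ENNReal.one_ne_top
    rw [hW, ENNReal.mul_top (mul_ne_zero two_ne_zero
      (ENNReal.rpow_pos (pos_iff_ne_zero.2 hL0) hL).ne')]
    exact le_top
  have half_absorbed : K * L⁻¹ ≤ 2⁻¹ := by
    rw [← div_eq_mul_inv]
    refine ENNReal.div_le_of_le_mul ?_
    rw [← mul_assoc, ENNReal.inv_mul_cancel two_ne_zero ENNReal.ofNat_ne_top, one_mul]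
    exact le_self_add
  let P := (L⁻¹ * V) ^ (s - 1) * V
  have hP : P ≠ ∞ := by finiteness
  have P_le : P ≤ 2 * W := by
    have : 2⁻¹ * P + 2⁻¹ * P ≤ 2⁻¹ * P + W := calc
      2⁻¹ * P + 2⁻¹ * P = P := by rw [← add_mul, ENNReal.inv_two_add_inv_two, one_mul]
      _ ≤ K * (L⁻¹ * V) ^ s + W := h _ (by simp [hL, hV0]) (by finiteness)
      _ = K * L⁻¹ * P + W := by rw [rpow_split]; ring
      _ ≤ 2⁻¹ * P + W := by gcongr
    exact (ENNReal.inv_mul_le_iff two_ne_zero ENNReal.ofNat_ne_top).1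
      ((ENNReal.add_le_add_iff_left (by finiteness)).1 this)
  calc V ^ s = L ^ (s - 1) * P := by
        rw [← mul_assoc, ← ENNReal.mul_rpow_of_nonneg _ _ hs1, ← mul_assoc,
          ENNReal.mul_inv_cancel hL0 hL, one_mul, rpow_split]
    _ ≤ L ^ (s - 1) * (2 * W) := by gcongr
    _ = 2 * L ^ (s - 1) * W := by ring

/-- The integrand of the pointwise bound behind the Hardy–Littlewood–Sobolev inequality, as a
function of the value `v = f(y)` and the distance `d = |x - y|`, in dimension `n`. It does not
depend on the level at which `f` is truncated. -/
noncomputable def truncationMajorant (n a p s : ℝ) (v d : ℝ≥0∞) : ℝ≥0∞ :=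
  v * d ^ (-a) * min (v ^ p) (d ^ (-n)) ^ (1 - s⁻¹)

lemma rpow_sub_one_le_min_rpow {n p s : ℝ} (hn : 0 < n) (hp : 0 < p) (hs : 1 < s) {l v d : ℝ≥0∞}
    (hv : l ^ (s / p) ≤ v) (hd : l ^ (s / n) * d ≤ 1) :
    l ^ (s - 1) ≤ min (v ^ p) (d ^ (-n)) ^ (1 - s⁻¹) := by
  have hs0 : 0 < s := one_pos.trans hs
  have hv' : l ^ s ≤ v ^ p := by
    rw [← div_mul_cancel₀ s hp.ne', ENNReal.rpow_mul]
    exact ENNReal.rpow_le_rpow hv hp.le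
  have hd' : l ^ s ≤ d ^ (-n) := by
    rw [← div_mul_cancel₀ s hn.ne', ENNReal.rpow_mul, ENNReal.rpow_neg, ← ENNReal.inv_rpow]
    exact ENNReal.rpow_le_rpow (ENNReal.le_inv_iff_mul_le.2 hd) hn.le
  calc l ^ (s - 1) = (l ^ s) ^ (1 - s⁻¹) := by
        rw [← ENNReal.rpow_mul, mul_sub, mul_one, mul_inv_cancel₀ hs0.ne']
    _ ≤ min (v ^ p) (d ^ (-n)) ^ (1 - s⁻¹) :=
        ENNReal.rpow_le_rpow (le_min hv' hd') (sub_nonneg.2 (inv_le_one_of_one_le₀ hs.le))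

lemma setLIntegral_one_le_mul_enorm_le {a p q s : ℝ} (hn : finrank ℝ E ≠ 0) (hs : s ≠ 0)
    (hpq : p.HolderConjugate q) (ha : a = finrank ℝ E * (1 - p⁻¹ + s⁻¹)) {f : E → ℝ≥0∞}
    (hf : AEMeasurable f μ) (x : E) {l : ℝ≥0∞} (hl0 : l ≠ 0) (hl : l ≠ ∞) :
    ∫⁻ y in {y | 1 ≤ l ^ (s / finrank ℝ E) * ‖x - y‖ₑ}, f y * ‖x - y‖ₑ ^ (-a) ∂μ ≤
      (∫⁻ y, f y ^ p ∂μ) ^ p⁻¹ * (∫⁻ z in {z : E | 1 ≤ ‖z‖ₑ}, ‖z‖ₑ ^ (-(a * q)) ∂μ) ^ q⁻¹ * l := by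
  have hq0 := hpq.symm.pos
  have total_exponent : s / finrank ℝ E * ((a * q - finrank ℝ E) * q⁻¹) = 1 := by
    rw [ha, hpq.one_sub_inv]
    field_simp
    ring
  have kernel := setLIntegral_mul_enorm_mem (μ := μ) (measurableSet_Ici (a := (1 : ℝ≥0∞))) (a * q)
    (ENNReal.rpow_pos (pos_iff_ne_zero.2 hl0) hl (p := s / finrank ℝ E)).ne' (by finiteness)
  have far_measurable : MeasurableSet {z : E | l ^ (s / finrank ℝ E) * ‖z‖ₑ ∈ Set.Ici 1} :=
    measurable_enorm.const_mul _ measurableSet_Ici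
  refine (setLIntegral_mul_rpow_neg_le hpq hf a x far_measurable).trans_eq ?_
  rw [kernel, ENNReal.mul_rpow_of_nonneg _ _ (inv_nonneg.2 hq0.le), ← ENNReal.rpow_mul,
    ← ENNReal.rpow_mul, total_exponent, ENNReal.rpow_one, mul_comm l, mul_assoc]
  rfl

lemma rpow_mul_setLIntegral_mul_enorm_lt_one {a p s : ℝ} (hn : finrank ℝ E ≠ 0) (hs : s ≠ 0)
    (ha : a = finrank ℝ E * (1 - p⁻¹ + s⁻¹)) (x : E) {l : ℝ≥0∞} (hl0 : l ≠ 0) (hl : l ≠ ∞) :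
    l ^ (s / p) * ∫⁻ y in {y | l ^ (s / finrank ℝ E) * ‖x - y‖ₑ < 1}, ‖x - y‖ₑ ^ (-a) ∂μ =
      (∫⁻ z in {z : E | ‖z‖ₑ < 1}, ‖z‖ₑ ^ (-a) ∂μ) * l := by
  have total_exponent : s / p + s / finrank ℝ E * (a - finrank ℝ E) = 1 := by
    rw [ha]
    field_simp
    ring
  have kernel := setLIntegral_mul_enorm_mem (μ := μ) (measurableSet_Iio (a := (1 : ℝ≥0∞))) a
    (ENNReal.rpow_pos (pos_iff_ne_zero.2 hl0) hl (p := s / finrank ℝ E)).ne' (by finiteness)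
  have translate : ∫⁻ y in {y | l ^ (s / finrank ℝ E) * ‖x - y‖ₑ < 1}, ‖x - y‖ₑ ^ (-a) ∂μ =
      ∫⁻ z in {z | l ^ (s / finrank ℝ E) * ‖z‖ₑ < 1}, ‖z‖ₑ ^ (-a) ∂μ := by
    rw [← lintegral_indicator (measurableSet_lt (by fun_prop) measurable_const),
      ← lintegral_indicator (measurableSet_lt (by fun_prop) measurable_const)]
    exact lintegral_sub_left_eq_self ({z | l ^ (s / finrank ℝ E) * ‖z‖ₑ < 1}.indicator
      fun z => ‖z‖ₑ ^ (-a)) x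
  rw [translate]
  refine (congrArg _ kernel).trans ?_
  rw [← ENNReal.rpow_mul, ← mul_assoc, ← ENNReal.rpow_add _ _ hl0 hl, total_exponent,
    ENNReal.rpow_one, mul_comm]
  rfl

lemma rpow_sub_one_mul_rieszPotential_le {a p q s : ℝ} (hn : finrank ℝ E ≠ 0)
    (hpq : p.HolderConjugate q) (hs : 1 < s) (ha : a = finrank ℝ E * (1 - p⁻¹ + s⁻¹))
    {f : E → ℝ≥0∞} (hf : AEMeasurable f μ) (x : E) {l : ℝ≥0∞} (hl0 : l ≠ 0) (hl : l ≠ ∞) :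
    l ^ (s - 1) * rieszPotential μ a f x ≤
      ((∫⁻ y, f y ^ p ∂μ) ^ p⁻¹ * (∫⁻ z in {z : E | 1 ≤ ‖z‖ₑ}, ‖z‖ₑ ^ (-(a * q)) ∂μ) ^ q⁻¹ +
        ∫⁻ z in {z : E | ‖z‖ₑ < 1}, ‖z‖ₑ ^ (-a) ∂μ) * l ^ s +
      ∫⁻ y, truncationMajorant (finrank ℝ E) a p s (f y) ‖x - y‖ₑ ∂μ := by
  have hs0 : s ≠ 0 := (one_pos.trans hs).ne'
  let near : Set E := {y | l ^ (s / finrank ℝ E) * ‖x - y‖ₑ < 1}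
  have near_measurable : MeasurableSet near := measurableSet_lt (by fun_prop) measurable_const
  have far_part := setLIntegral_one_le_mul_enorm_le hn hs0 hpq ha hf x hl0 hl
  have low_part := rpow_mul_setLIntegral_mul_enorm_lt_one (μ := μ) hn hs0 ha x hl0 hl
  have high_part : l ^ (s - 1) * ∫⁻ y in near, {y | l ^ (s / p) < f y}.indicator
      (fun y => f y * ‖x - y‖ₑ ^ (-a)) y ∂μ ≤
      ∫⁻ y, truncationMajorant (finrank ℝ E) a p s (f y) ‖x - y‖ₑ ∂μ := by
    rw [← lintegral_const_mul' _ _ (by finiteness)]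
    refine (setLIntegral_mono' near_measurable fun y hy => ?_).trans (setLIntegral_le_lintegral _ _)
    by_cases hfy : l ^ (s / p) < f y
    · rw [Set.indicator_of_mem (by exact hfy), mul_comm, truncationMajorant]
      gcongr
      exact rpow_sub_one_le_min_rpow (by positivity) hpq.pos hs hfy.le hy.le
    · simp [hfy]
  have compl_near : nearᶜ = {y | 1 ≤ l ^ (s / finrank ℝ E) * ‖x - y‖ₑ} := by ext y; simp [near]
  have split := lintegral_mul_le_add_truncation (μ := μ) near_measurable
    (g := fun y => ‖x - y‖ₑ ^ (-a)) (by fun_prop) f (l ^ (s / p))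
  rw [compl_near, low_part] at split
  have rpow_split : l ^ s = l ^ (s - 1) * l := by
    conv_lhs => rw [← sub_add_cancel s 1, ENNReal.rpow_add _ _ hl0 hl, ENNReal.rpow_one]
  have potential_le := split.trans (add_le_add_left (add_le_add_left far_part _) _)
  refine (mul_le_mul_right potential_le _).trans ?_
  rw [← add_mul, mul_add, rpow_split, mul_left_comm]
  gcongr

lemma truncationMajorant_eq_rescale {n a p s : ℝ} (hn : n ≠ 0) {v d : ℝ≥0∞} (hv0 : v ≠ 0)
    (hv : v ≠ ∞) (hd : d ≠ ∞) :
    truncationMajorant n a p s v d =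
      v ^ (1 + p * a / n + p * (1 - s⁻¹)) * truncationMajorant n a p s 1 (v ^ (p / n) * d) := by
  have hvd (e : ℝ) : (v ^ (p / n) * d) ^ (-e) = v ^ (-(p * e / n)) * d ^ (-e) := by
    rw [ENNReal.mul_rpow_of_ne_top (by finiteness) hd, ← ENNReal.rpow_mul]
    ring_nf
  have scale_min : min (v ^ p) (d ^ (-n)) = v ^ p * min 1 (v ^ (-p) * d ^ (-n)) := by
    rw [mul_min, ← mul_assoc, ← ENNReal.rpow_add _ _ hv0 hv]
    simp
  simp only [truncationMajorant]
  rw [hvd, hvd, mul_div_cancel_right₀ _ hn, scale_min, ENNReal.one_rpow,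
    ENNReal.mul_rpow_of_ne_top (by finiteness) (ne_top_of_le_ne_top ENNReal.one_ne_top
      (min_le_left _ _)), ENNReal.rpow_add _ _ hv0 hv, ENNReal.rpow_add _ _ hv0 hv,
    ENNReal.rpow_one, ENNReal.rpow_mul v p, one_mul]
  have cancel : v ^ (p * a / n) * v ^ (-(p * a / n)) = 1 := by
    rw [← ENNReal.rpow_add _ _ hv0 hv, add_neg_cancel, ENNReal.rpow_zero]
  generalize min 1 (v ^ (-p) * d ^ (-n)) = m
  calc v * d ^ (-a) * ((v ^ p) ^ (1 - s⁻¹) * m ^ (1 - s⁻¹))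
      = v * 1 * (v ^ p) ^ (1 - s⁻¹) * (d ^ (-a) * m ^ (1 - s⁻¹)) := by ring
    _ = v * v ^ (p * a / n) * (v ^ p) ^ (1 - s⁻¹) *
          (v ^ (-(p * a / n)) * d ^ (-a) * m ^ (1 - s⁻¹)) := by rw [← cancel]; ring

lemma lintegral_truncationMajorant_one_lt_top [Nontrivial E] {a p s : ℝ} (hs : 1 < s)
    (ha : a < finrank ℝ E) (has : finrank ℝ E * s⁻¹ < a) :
    ∫⁻ z : E, truncationMajorant (finrank ℝ E) a p s 1 ‖z‖ₑ ∂μ < ∞ := by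
  have hs1 : 0 ≤ 1 - s⁻¹ := sub_nonneg.2 (inv_le_one_of_one_le₀ hs.le)
  have near_measurable : MeasurableSet {z : E | ‖z‖ₑ < 1} :=
    measurableSet_lt measurable_enorm measurable_const
  have near_bound (z : E) : truncationMajorant (finrank ℝ E) a p s 1 ‖z‖ₑ ≤ ‖z‖ₑ ^ (-a) := by
    rw [truncationMajorant, one_mul, ENNReal.one_rpow]
    exact mul_le_of_le_one_right' (ENNReal.rpow_le_one (min_le_left _ _) hs1)
  have far_bound (z : E) (hz : 1 ≤ ‖z‖ₑ) : truncationMajorant (finrank ℝ E) a p s 1 ‖z‖ₑ ≤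
      ‖z‖ₑ ^ (-(a + finrank ℝ E * (1 - s⁻¹))) := by
    have hz0 : ‖z‖ₑ ≠ 0 := (one_pos.trans_le hz).ne'
    rw [truncationMajorant, one_mul, neg_add, ENNReal.rpow_add _ _ hz0 enorm_ne_top, ← neg_mul,
      ENNReal.rpow_mul]
    gcongr
    exact min_le_right _ _
  have compl_near : {z : E | ‖z‖ₑ < 1}ᶜ = {z : E | 1 ≤ ‖z‖ₑ} := by ext z; simp
  rw [← lintegral_add_compl _ near_measurable, compl_near]
  refine ENNReal.add_lt_top.2 ⟨?_, ?_⟩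
  · exact (lintegral_mono near_bound).trans_lt (setLIntegral_enorm_lt_one_rpow_neg_lt_top ha)
  · have far_measurable : MeasurableSet {z : E | 1 ≤ ‖z‖ₑ} := compl_near ▸ near_measurable.compl
    exact (setLIntegral_mono' far_measurable far_bound).trans_lt
      (setLIntegral_one_le_enorm_rpow_neg_lt_top (by linarith))

lemma lintegral_truncationMajorant [Nontrivial E] {a p s : ℝ} (hp : 0 < p)
    (ha : a = finrank ℝ E * (1 - p⁻¹ + s⁻¹)) {v : ℝ≥0∞} (hv : v ≠ ∞) (y : E) :
    ∫⁻ x : E, truncationMajorant (finrank ℝ E) a p s v ‖x - y‖ₑ ∂μ =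
      v ^ p * ∫⁻ z : E, truncationMajorant (finrank ℝ E) a p s 1 ‖z‖ₑ ∂μ := by
  have hn : (finrank ℝ E : ℝ) ≠ 0 := by exact_mod_cast finrank_pos.ne'
  rw [lintegral_sub_right_eq_self fun z => truncationMajorant (finrank ℝ E) a p s v ‖z‖ₑ]
  obtain rfl | hv0 := eq_or_ne v 0
  · simp [truncationMajorant, ENNReal.zero_rpow_of_pos hp]
  have total_exponent : 1 + p * a / finrank ℝ E + p * (1 - s⁻¹) +
      p / finrank ℝ E * -(finrank ℝ E) = p := by
    rw [ha]
    field_simp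
    ring
  simp only [truncationMajorant_eq_rescale hn hv0 hv enorm_ne_top]
  have hr0 : v ^ (p / finrank ℝ E) ≠ 0 := (ENNReal.rpow_pos (pos_iff_ne_zero.2 hv0) hv).ne'
  rw [lintegral_const_mul' _ _ (by finiteness),
    lintegral_comp_mul_enorm (truncationMajorant (finrank ℝ E) a p s 1) hr0 (by finiteness),
    ← ENNReal.rpow_mul, ← mul_assoc, ← ENNReal.rpow_add _ _ hv0 hv, total_exponent]

lemma exists_rieszPotential_rpow_le [Nontrivial E] {a p s : ℝ} (hp : 1 < p) (hps : p < s)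
    (ha : a = finrank ℝ E * (1 - p⁻¹ + s⁻¹)) {f : E → ℝ≥0∞} (hf : AEMeasurable f μ)
    (hfp : ∫⁻ y, f y ^ p ∂μ ≠ ∞) : ∃ C ≠ ∞, ∀ x, rieszPotential μ a f x ^ s ≤
      C * ∫⁻ y, truncationMajorant (finrank ℝ E) a p s (f y) ‖x - y‖ₑ ∂μ := by
  have hs : 1 < s := hp.trans hps
  have hs1 : 0 ≤ s - 1 := sub_nonneg.2 hs.le
  have hn : (0 : ℝ) < finrank ℝ E := by exact_mod_cast finrank_pos
  let q := p.conjExponent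
  have hpq : p.HolderConjugate q := .conjExponent hp
  have hp0 := hpq.pos
  have hq0 := hpq.symm.pos
  have a_lt : a < finrank ℝ E := by
    have := inv_strictAnti₀ hp0 hps
    rw [ha]
    nlinarith
  have lt_aq : finrank ℝ E < a * q := by
    rw [ha, hpq.one_sub_inv, mul_assoc, add_mul, inv_mul_cancel₀ hq0.ne']
    have : 0 < s⁻¹ * q := by positivity
    nlinarith
  let K := (∫⁻ y, f y ^ p ∂μ) ^ p⁻¹ * (∫⁻ z in {z : E | 1 ≤ ‖z‖ₑ}, ‖z‖ₑ ^ (-(a * q)) ∂μ) ^ q⁻¹ +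
    ∫⁻ z in {z : E | ‖z‖ₑ < 1}, ‖z‖ₑ ^ (-a) ∂μ
  have hK : K ≠ ∞ := by
    have near := (setLIntegral_enorm_lt_one_rpow_neg_lt_top (μ := μ) a_lt).ne
    have far := (setLIntegral_one_le_enorm_rpow_neg_lt_top (μ := μ) lt_aq).ne
    finiteness
  exact ⟨2 * (2 * (K + 1)) ^ (s - 1), by finiteness, fun x =>
    rpow_le_of_forall_rpow_sub_one_mul_le hs hK fun l hl0 hl =>
      rpow_sub_one_mul_rieszPotential_le finrank_pos.ne' hpq hs ha hf x hl0 hl⟩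

theorem lintegral_rieszPotential_rpow_lt_top [Nontrivial E] {a p s : ℝ} (hp : 1 < p) (hps : p < s)
    (ha : a = finrank ℝ E * (1 - p⁻¹ + s⁻¹)) {f : E → ℝ≥0∞} (hf : AEMeasurable f μ)
    (hfp : ∫⁻ y, f y ^ p ∂μ ≠ ∞) : ∫⁻ x, rieszPotential μ a f x ^ s ∂μ < ∞ := by
  have hp0 : 0 < p := one_pos.trans hp
  have hn : (0 : ℝ) < finrank ℝ E := by exact_mod_cast finrank_pos
  have hp_inv : p⁻¹ < 1 := inv_lt_one_of_one_lt₀ hp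
  have hs_inv : s⁻¹ < p⁻¹ := inv_strictAnti₀ hp0 hps
  let G := truncationMajorant (finrank ℝ E) a p s
  obtain ⟨C, hC, pointwise⟩ := exists_rieszPotential_rpow_le hp hps ha hf hfp
  have f_ne_top : ∀ᵐ y ∂μ, f y ≠ ∞ := by
    filter_upwards [ae_lt_top' (hf.pow_const p) hfp] with y hy hfy
    simp [hfy, hp0] at hy
  have G_measurable : AEMeasurable (Function.uncurry fun x y => G (f y) ‖x - y‖ₑ) (μ.prod μ) := by
    have : AEMeasurable (fun z : E × E => f z.2) (μ.prod μ) := hf.comp_snd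
    simp only [G, truncationMajorant, Function.uncurry_def]
    fun_prop
  have G_lt_top : ∫⁻ z : E, G 1 ‖z‖ₑ ∂μ < ∞ :=
    lintegral_truncationMajorant_one_lt_top (hp.trans hps) (by rw [ha]; nlinarith)
      (by rw [ha]; nlinarith)
  calc ∫⁻ x, rieszPotential μ a f x ^ s ∂μ
      ≤ ∫⁻ x, C * ∫⁻ y, G (f y) ‖x - y‖ₑ ∂μ ∂μ := lintegral_mono pointwise
    _ = C * ∫⁻ y, ∫⁻ x, G (f y) ‖x - y‖ₑ ∂μ ∂μ := by
        rw [lintegral_const_mul' _ _ hC, lintegral_lintegral_swap G_measurable]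
    _ = C * ∫⁻ y, f y ^ p * ∫⁻ z : E, G 1 ‖z‖ₑ ∂μ ∂μ := by
        congr 1
        refine lintegral_congr_ae (f_ne_top.mono fun y hy => ?_)
        exact lintegral_truncationMajorant hp0 ha hy y
    _ < ∞ := by
        rw [lintegral_mul_const'' _ (hf.pow_const p)]
        finiteness

end RieszPotential

section ContinuityMethod

variable {E : Type*} [NormedAddCommGroup E] [CompleteSpace E]

lemma isUnit_of_mul_norm_sub_lt_one {𝕜 : Type*} [NontriviallyNormedField 𝕜] [NormedSpace 𝕜 E]
    {A B : E →L[𝕜] E} {K : ℝ≥0} (hA : IsUnit A) (hK : ∀ v, ‖v‖ ≤ K * ‖A v‖)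
    (hAB : K * ‖A - B‖ < 1) : IsUnit B := by
  obtain ⟨U, rfl⟩ := hA
  have norm_inv_mul_le : ‖(↑U⁻¹ * (↑U - B) : E →L[𝕜] E)‖ ≤ K * ‖↑U - B‖ := by
    refine ContinuousLinearMap.opNorm_le_bound _ (by positivity) fun v => ?_
    calc ‖(↑U⁻¹ * (↑U - B) : E →L[𝕜] E) v‖
        ≤ K * ‖(↑U * (↑U⁻¹ * (↑U - B)) : E →L[𝕜] E) v‖ := hK _
      _ = K * ‖(↑U - B) v‖ := by rw [U.mul_inv_cancel_left]
      _ ≤ K * (‖↑U - B‖ * ‖v‖) := by gcongr; exact ContinuousLinearMap.le_opNorm _ _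
      _ = K * ‖↑U - B‖ * ‖v‖ := (mul_assoc ..).symm
  have factor : ↑U * (1 - ↑U⁻¹ * (↑U - B)) = B := by
    rw [mul_sub, U.mul_inv_cancel_left, mul_one, sub_sub_cancel]
  rw [← factor]
  exact U.isUnit.mul (isUnit_one_sub_of_norm_lt_one (norm_inv_mul_le.trans_lt hAB))

theorem isUnit_one_sub_of_forall_norm_le [NormedSpace ℝ E] {T : E →L[ℝ] E} {K : ℝ≥0}
    (hK : ∀ t ∈ Set.Icc (0 : ℝ) 1, ∀ v, ‖v‖ ≤ K * ‖v - t • T v‖) : IsUnit (1 - T) := by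
  obtain ⟨N, hN⟩ := exists_nat_gt (K * ‖T‖)
  have N_pos : (0 : ℝ) < N := lt_of_le_of_lt (by positivity) hN
  have isUnit_step (n : ℕ) (hn : n ≤ N) : IsUnit (1 - ((n : ℝ) / N) • T) := by
    induction n with
    | zero => simp
    | succ n ih =>
      have div_mem : (n : ℝ) / N ∈ Set.Icc (0 : ℝ) 1 :=
        ⟨by positivity, (div_le_one N_pos).2 (by exact_mod_cast Nat.le_of_succ_le hn)⟩
      refine isUnit_of_mul_norm_sub_lt_one (ih (Nat.le_of_succ_le hn)) (hK _ div_mem) ?_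
      rw [sub_sub_sub_cancel_left, ← sub_smul, ← sub_div, Nat.cast_succ, add_sub_cancel_left,
        norm_smul, Real.norm_of_nonneg (by positivity), mul_left_comm, one_div_mul_eq_div]
      exact (div_lt_one N_pos).2 hN
  simpa only [div_self N_pos.ne', one_smul] using isUnit_step N le_rfl

end ContinuityMethod

section EssentiallyBounded

variable {α F : Type*} {m : MeasurableSpace α} {μ : Measure α} [NormedAddCommGroup F]

lemma ae_norm_coeFn_le_norm_lp_top (v : Lp F ∞ μ) : ∀ᵐ x ∂μ, ‖v x‖ ≤ ‖v‖ := by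
  filter_upwards [ae_le_eLpNormEssSup (f := v) (μ := μ)] with x hx
  rw [Lp.norm_def, ← toReal_enorm]
  exact ENNReal.toReal_mono (Lp.eLpNorm_ne_top v) (by rwa [eLpNorm_exponent_top])

lemma norm_lp_top_le_of_ae_norm_le {v : Lp F ∞ μ} {C : ℝ≥0} (hC : ∀ᵐ x ∂μ, ‖v x‖ ≤ C) :
    ‖v‖ ≤ C := by
  rw [Lp.norm_def, eLpNorm_exponent_top]
  exact ENNReal.toReal_le_of_le_ofReal C.2 (eLpNormEssSup_le_of_ae_bound hC)

end EssentiallyBounded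

section CauchyTransform

variable {μ : Measure ℂ}

/-- The solid Cauchy transform with respect to `μ`, without the customary factor `1 / π`. -/
noncomputable def cauchyTransform (μ : Measure ℂ) (f : ℂ → ℂ) (k : ℂ) : ℂ :=
  ∫ y, f y / (k - y) ∂μ

/-- The function `g` is measurable and `∫ |g(y)| / |k - y| dμ(y) ≤ M` for every `k`, so that its
Cauchy transform converges absolutely everywhere and is bounded by `M`. -/
structure BoundedCauchyPotential (μ : Measure ℂ) (g : ℂ → ℂ) (M : ℝ≥0) : Prop where
  aestronglyMeasurable : AEStronglyMeasurable g μ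
  lintegral_le : ∀ k, ∫⁻ y, ‖g y / (k - y)‖ₑ ∂μ ≤ M

lemma cauchyTransform_congr_ae {f g : ℂ → ℂ} (h : f =ᵐ[μ] g) :
    cauchyTransform μ f = cauchyTransform μ g :=
  funext fun _ => integral_congr_ae (h.mono fun y hy => by simp only [hy])

lemma cauchyTransform_const_mul (c : ℂ) (f : ℂ → ℂ) (k : ℂ) :
    cauchyTransform μ (fun y => c * f y) k = c * cauchyTransform μ f k := by
  simp only [cauchyTransform, mul_div_assoc, integral_const_mul]

lemma cauchyTransform_add {f g : ℂ → ℂ} {k : ℂ} (hf : Integrable (fun y => f y / (k - y)) μ)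
    (hg : Integrable (fun y => g y / (k - y)) μ) :
    cauchyTransform μ (fun y => f y + g y) k = cauchyTransform μ f k + cauchyTransform μ g k := by
  simp only [cauchyTransform, add_div, integral_add hf hg]

lemma aestronglyMeasurable_comp_snd_div_sub [SFinite μ] {f : ℂ → ℂ}
    (hf : AEStronglyMeasurable f μ) :
    AEStronglyMeasurable (fun z : ℂ × ℂ => f z.2 / (z.1 - z.2)) (μ.prod μ) := by
  simp only [div_eq_mul_inv]
  exact hf.comp_snd.mul (Measurable.aestronglyMeasurable (by fun_prop))

lemma aestronglyMeasurable_cauchyTransform [SFinite μ] {f : ℂ → ℂ}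
    (hf : AEStronglyMeasurable f μ) : AEStronglyMeasurable (cauchyTransform μ f) μ :=
  (aestronglyMeasurable_comp_snd_div_sub hf).integral_prod_right'

lemma aestronglyMeasurable_of_integrable_div_sub [NullSingletonClass μ] {f : ℂ → ℂ} {k : ℂ}
    (hf : Integrable (fun y => f y / (k - y)) μ) : AEStronglyMeasurable f μ := by
  have hsub : AEStronglyMeasurable (fun y => k - y) μ :=
    (measurable_const.sub measurable_id).aestronglyMeasurable
  refine (hf.aestronglyMeasurable.mul hsub).congr ?_
  filter_upwards [Measure.ae_ne μ k] with y hy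
  exact div_mul_cancel₀ _ (sub_ne_zero.2 hy.symm)

lemma aestronglyMeasurable_of_ae_eq_cauchyTransform [SFinite μ] [NullSingletonClass μ]
    {f y : ℂ → ℂ}
    (hy : ∀ᵐ k ∂μ, Integrable (fun x => f x / (k - x)) μ ∧ y k = cauchyTransform μ f k) :
    AEStronglyMeasurable y μ := by
  obtain rfl | hμ := eq_or_ne μ 0
  · exact aestronglyMeasurable_zero_measure y
  have : (ae μ).NeBot := ae_neBot.2 hμ
  obtain ⟨k, hk, -⟩ := hy.exists
  exact (aestronglyMeasurable_cauchyTransform (aestronglyMeasurable_of_integrable_div_sub hk)).congr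
    (hy.mono fun x hx => hx.2.symm)

namespace BoundedCauchyPotential

variable {g h : ℂ → ℂ} {M K : ℝ≥0}

lemma integrable (hg : BoundedCauchyPotential μ g M) (k : ℂ) :
    Integrable (fun y => g y / (k - y)) μ := by
  refine ⟨?_, (hg.lintegral_le k).trans_lt ENNReal.coe_lt_top⟩
  simp only [div_eq_mul_inv]
  exact hg.aestronglyMeasurable.mul (Measurable.aestronglyMeasurable (by fun_prop))

lemma integral_norm_le (hg : BoundedCauchyPotential μ g M) (k : ℂ) :
    ∫ y, ‖g y / (k - y)‖ ∂μ ≤ M := by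
  rw [integral_norm_eq_lintegral_enorm (hg.integrable k).aestronglyMeasurable]
  exact ENNReal.toReal_le_coe_of_le_coe (hg.lintegral_le k)

lemma norm_cauchyTransform_le (hg : BoundedCauchyPotential μ g M) (k : ℂ) :
    ‖cauchyTransform μ g k‖ ≤ M :=
  (norm_integral_le_integral_norm _).trans (hg.integral_norm_le k)

lemma norm_exp_neg_le (hg : BoundedCauchyPotential μ g M) (k : ℂ) :
    ‖exp (-cauchyTransform μ g k)‖ ≤ (Real.exp M).toNNReal := by
  rw [Real.coe_toNNReal _ (Real.exp_pos _).le]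
  refine (norm_exp_le_exp_norm _).trans (Real.exp_le_exp.2 ?_)
  rw [norm_neg]
  exact hg.norm_cauchyTransform_le k

lemma mul (hg : BoundedCauchyPotential μ g M) (hh : AEStronglyMeasurable h μ)
    (hK : ∀ᵐ y ∂μ, ‖h y‖ ≤ K) : BoundedCauchyPotential μ (fun y => g y * h y) (K * M) where
  aestronglyMeasurable := hg.aestronglyMeasurable.mul hh
  lintegral_le k := calc
    ∫⁻ y, ‖g y * h y / (k - y)‖ₑ ∂μ ≤ ∫⁻ y, K * ‖g y / (k - y)‖ₑ ∂μ := by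
      refine lintegral_mono_ae (hK.mono fun y hy => ?_)
      rw [mul_comm (g y), mul_div_assoc, enorm_mul]
      gcongr
      exact ENNReal.coe_le_coe.2 hy
    _ ≤ (K * M : ℝ≥0) := by
      rw [lintegral_const_mul' _ _ ENNReal.coe_ne_top, ENNReal.coe_mul]
      gcongr
      exact hg.lintegral_le k

lemma const_mul (hg : BoundedCauchyPotential μ g M) (c : ℂ) :
    BoundedCauchyPotential μ (fun y => c * g y) (‖c‖₊ * M) := by
  simpa only [mul_comm c] using hg.mul aestronglyMeasurable_const (.of_forall fun _ => le_rfl)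

lemma aestronglyMeasurable_cauchyTransform [SFinite μ] (hg : BoundedCauchyPotential μ g M) :
    AEStronglyMeasurable (cauchyTransform μ g) μ :=
  _root_.aestronglyMeasurable_cauchyTransform hg.aestronglyMeasurable

end BoundedCauchyPotential

lemma ae_prod_fst_ne_snd [SFinite μ] [NullSingletonClass μ] :
    ∀ᵐ z : ℂ × ℂ ∂μ.prod μ, z.1 ≠ z.2 :=
  (Measure.ae_prod_iff_ae_ae
    (measurableSet_eq_fun measurable_fst measurable_snd).compl).2
    (.of_forall fun x => (Measure.ae_ne μ x).mono fun _ hy => hy.symm)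

lemma cauchyKernel_sub_eq_ae [SFinite μ] [NullSingletonClass μ] (f g : ℂ → ℂ) (k : ℂ) :
    (fun z : ℂ × ℂ => f z.1 / (k - z.1) * (g z.2 / (k - z.2)) -
      f z.1 / (k - z.1) * (g z.2 / (z.1 - z.2))) =ᵐ[μ.prod μ]
    fun z => g z.2 / (k - z.2) * (f z.1 / (z.2 - z.1)) := by
  have fst_ne : ∀ᵐ z : ℂ × ℂ ∂μ.prod μ, z.1 ≠ k :=
    Measure.quasiMeasurePreserving_fst.ae (Measure.ae_ne μ k)
  have snd_ne : ∀ᵐ z : ℂ × ℂ ∂μ.prod μ, z.2 ≠ k :=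
    Measure.quasiMeasurePreserving_snd.ae (Measure.ae_ne μ k)
  filter_upwards [fst_ne, snd_ne, ae_prod_fst_ne_snd] with z h1 h2 h12
  have h1 := sub_ne_zero.2 h1.symm
  have h2 := sub_ne_zero.2 h2.symm
  have h12 := sub_ne_zero.2 h12
  rw [← neg_sub z.1 z.2]
  field_simp
  ring

lemma integral_div_sub_mul_div_sub (f g : ℂ → ℂ) (k x : ℂ) :
    ∫ y, f x / (k - x) * (g y / (x - y)) ∂μ = f x * cauchyTransform μ g x / (k - x) := by
  rw [integral_const_mul, cauchyTransform]
  ring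

section ProductFormula

variable [SFinite μ] {f g : ℂ → ℂ} {M : ℝ≥0} {k : ℂ}

lemma integrable_prod_cauchyKernel (hg : BoundedCauchyPotential μ g M)
    (hf : Integrable (fun y => f y / (k - y)) μ) :
    Integrable (fun z : ℂ × ℂ => f z.1 / (k - z.1) * (g z.2 / (z.1 - z.2))) (μ.prod μ) := by
  have measurable : AEStronglyMeasurable
      (fun z : ℂ × ℂ => f z.1 / (k - z.1) * (g z.2 / (z.1 - z.2))) (μ.prod μ) :=
    hf.aestronglyMeasurable.comp_fst.mul
      (aestronglyMeasurable_comp_snd_div_sub hg.aestronglyMeasurable)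
  refine (integrable_prod_iff measurable).2
    ⟨.of_forall fun x => (hg.integrable x).const_mul (f x / (k - x)), ?_⟩
  refine (hf.norm.mul_const (M : ℝ)).mono' measurable.norm.integral_prod_right'
    (.of_forall fun x => ?_)
  simp only [norm_mul, integral_const_mul, norm_norm]
  gcongr
  rw [Real.norm_of_nonneg (integral_nonneg fun _ => norm_nonneg _)]
  exact hg.integral_norm_le x

lemma integrable_mul_cauchyTransform (hg : BoundedCauchyPotential μ g M)
    (hf : Integrable (fun y => f y / (k - y)) μ) :
    Integrable (fun y => f y * cauchyTransform μ g y / (k - y)) μ := by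
  simpa only [integral_div_sub_mul_div_sub] using
    (integrable_prod_cauchyKernel hg hf).integral_prod_left

variable [NullSingletonClass μ]

lemma integrable_prod_cauchyKernel_swap (hg : BoundedCauchyPotential μ g M)
    (hf : Integrable (fun y => f y / (k - y)) μ) :
    Integrable (fun z : ℂ × ℂ => g z.2 / (k - z.2) * (f z.1 / (z.2 - z.1))) (μ.prod μ) :=
  ((hf.mul_prod (hg.integrable k)).sub (integrable_prod_cauchyKernel hg hf)).congr
    (cauchyKernel_sub_eq_ae f g k)

lemma integrable_mul_cauchyTransform_swap (hg : BoundedCauchyPotential μ g M)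
    (hf : Integrable (fun y => f y / (k - y)) μ) :
    Integrable (fun y => g y * cauchyTransform μ f y / (k - y)) μ := by
  simpa only [integral_div_sub_mul_div_sub] using
    (integrable_prod_cauchyKernel_swap hg hf).integral_prod_right

theorem cauchyTransform_mul_cauchyTransform (hg : BoundedCauchyPotential μ g M)
    (hf : Integrable (fun y => f y / (k - y)) μ) :
    cauchyTransform μ f k * cauchyTransform μ g k =
      cauchyTransform μ (fun y => f y * cauchyTransform μ g y) k +
        cauchyTransform μ (fun y => g y * cauchyTransform μ f y) k := by
  have left := integral_prod _ (integrable_prod_cauchyKernel hg hf)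
  have right := integral_prod_symm _ (integrable_prod_cauchyKernel_swap hg hf)
  simp only [integral_div_sub_mul_div_sub] at left right
  have difference := integral_congr_ae (cauchyKernel_sub_eq_ae (μ := μ) f g k)
  rw [integral_sub (hf.mul_prod (hg.integrable k)) (integrable_prod_cauchyKernel hg hf),
    integral_prod_mul (fun y => f y / (k - y)) fun y => g y / (k - y), left, right] at difference
  exact sub_eq_iff_eq_add'.1 difference

end ProductFormula

section Exponential

variable [SFinite μ] {β : ℂ → ℂ} {M : ℝ≥0}

lemma BoundedCauchyPotential.mul_cauchyTransform_pow (hβ : BoundedCauchyPotential μ β M) (n : ℕ) :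
    BoundedCauchyPotential μ (fun y => β y * cauchyTransform μ β y ^ n) (M ^ n * M) := by
  refine hβ.mul (hβ.aestronglyMeasurable_cauchyTransform.pow n) (.of_forall fun y => ?_)
  rw [norm_pow, NNReal.coe_pow]
  gcongr
  exact hβ.norm_cauchyTransform_le y

lemma BoundedCauchyPotential.aestronglyMeasurable_exp_neg (hβ : BoundedCauchyPotential μ β M) :
    AEStronglyMeasurable (fun y => exp (-cauchyTransform μ β y)) μ :=
  continuous_exp.comp_aestronglyMeasurable hβ.aestronglyMeasurable_cauchyTransform.neg

lemma summable_integral_norm_mul_cauchyTransform_pow (hβ : BoundedCauchyPotential μ β M)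
    (k : ℂ) :
    Summable fun n : ℕ => ∫ y,
      ‖(-1) ^ (n + 1) / (n.factorial : ℂ) * (β y * cauchyTransform μ β y ^ n / (k - y))‖ ∂μ := by
  refine .of_nonneg_of_le (fun n => integral_nonneg fun _ => norm_nonneg _) (fun n => ?_)
    ((Real.summable_pow_div_factorial M).mul_right (M : ℝ))
  have potential_le := (hβ.mul_cauchyTransform_pow n).integral_norm_le k
  calc ∫ y, ‖(-1) ^ (n + 1) / (n.factorial : ℂ) *
        (β y * cauchyTransform μ β y ^ n / (k - y))‖ ∂μ
      = 1 / (n.factorial : ℝ) * ∫ y, ‖β y * cauchyTransform μ β y ^ n / (k - y)‖ ∂μ := by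
        simp only [norm_mul _ (_ / (k - _)), integral_const_mul, norm_div ((-1 : ℂ) ^ _), norm_pow,
          norm_neg, norm_one, one_pow, norm_natCast]
    _ ≤ 1 / (n.factorial : ℝ) * ((M : ℝ) ^ n * M) := by
        gcongr
        exact_mod_cast potential_le
    _ = (M : ℝ) ^ n / n.factorial * M := by ring

variable [NullSingletonClass μ]

lemma cauchyTransform_mul_cauchyTransform_pow (hβ : BoundedCauchyPotential μ β M) (n : ℕ) (k : ℂ) :
    cauchyTransform μ (fun y => β y * cauchyTransform μ β y ^ n) k =
      cauchyTransform μ β k ^ (n + 1) / (n + 1) := by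
  induction n generalizing k with
  | zero => simp
  | succ n ih =>
    have product := cauchyTransform_mul_cauchyTransform hβ
      ((hβ.mul_cauchyTransform_pow n).integrable k)
    have absorb : (fun y => β y * cauchyTransform μ (fun y => β y * cauchyTransform μ β y ^ n) y) =
        fun y => (n + 1 : ℂ)⁻¹ * (β y * cauchyTransform μ β y ^ (n + 1)) := by
      ext y
      rw [ih]
      ring
    simp only [mul_assoc, ← pow_succ] at product
    rw [absorb, cauchyTransform_const_mul, ih] at product
    have n_add_one_ne : (n + 1 : ℂ) ≠ 0 := n.cast_add_one_ne_zero
    have n_add_two_ne : (n + 1 + 1 : ℂ) ≠ 0 := mod_cast (n + 1).succ_ne_zero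
    push_cast
    field_simp at product ⊢
    linear_combination -product

lemma integral_neg_one_pow_div_factorial_mul_cauchyTransform_pow
    (hβ : BoundedCauchyPotential μ β M) (k : ℂ) (n : ℕ) :
    ∫ y, (-1) ^ (n + 1) / (n.factorial : ℂ) * (β y * cauchyTransform μ β y ^ n / (k - y)) ∂μ =
      (-cauchyTransform μ β k) ^ (n + 1) / (n + 1).factorial := by
  have power := cauchyTransform_mul_cauchyTransform_pow hβ n k
  rw [cauchyTransform] at power
  rw [integral_const_mul, power, neg_pow (cauchyTransform μ β k), Nat.factorial_succ]
  push_cast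
  rw [div_mul_div_comm, mul_comm (n.factorial : ℂ)]

theorem cauchyTransform_mul_neg_exp_neg (hβ : BoundedCauchyPotential μ β M) (k : ℂ) :
    cauchyTransform μ (fun y => β y * -exp (-cauchyTransform μ β y)) k =
      exp (-cauchyTransform μ β k) - 1 := by
  have exp_series (z : ℂ) : HasSum (fun n : ℕ => z ^ n / (n.factorial : ℂ)) (exp z) := by
    rw [exp_eq_exp_ℂ]
    exact NormedSpace.expSeries_div_hasSum_exp z
  have integrand (y : ℂ) :
      ∑' n : ℕ, (-1) ^ (n + 1) / (n.factorial : ℂ) * (β y * cauchyTransform μ β y ^ n / (k - y)) =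
        β y * -exp (-cauchyTransform μ β y) / (k - y) := by
    rw [mul_neg, neg_div, mul_div_right_comm, ← neg_mul,
      ← ((exp_series (-cauchyTransform μ β y)).mul_left (-(β y / (k - y)))).tsum_eq]
    refine tsum_congr fun n => ?_
    rw [neg_pow]
    ring
  have series := hasSum_integral_of_summable_integral_norm
    (fun n => ((hβ.mul_cauchyTransform_pow n).integrable k).const_mul
      ((-1) ^ (n + 1) / (n.factorial : ℂ)))
    (summable_integral_norm_mul_cauchyTransform_pow hβ k)
  simp only [integrand, integral_neg_one_pow_div_factorial_mul_cauchyTransform_pow hβ] at series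
  have tail := (hasSum_nat_add_iff' 1).2 (exp_series (-cauchyTransform μ β k))
  simp only [Finset.sum_range_one, pow_zero, Nat.factorial_zero, Nat.cast_one, div_one] at tail
  exact series.unique tail

end Exponential

section SimilarityPrinciple

variable [SFinite μ] {β B f y : ℂ → ℂ} {M N : ℝ≥0}

lemma BoundedCauchyPotential.mul_exp_neg_cauchyTransform (hβ : BoundedCauchyPotential μ β M)
    (hf : BoundedCauchyPotential μ f N) :
    BoundedCauchyPotential μ (fun y => f y * exp (-cauchyTransform μ β y))
      ((Real.exp M).toNNReal * N) :=
  hf.mul hβ.aestronglyMeasurable_exp_neg (.of_forall hβ.norm_exp_neg_le)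

lemma BoundedCauchyPotential.mul_neg_exp_neg_cauchyTransform
    (hβ : BoundedCauchyPotential μ β M) :
    BoundedCauchyPotential μ (fun y => β y * -exp (-cauchyTransform μ β y))
      ((Real.exp M).toNNReal * M) :=
  hβ.mul hβ.aestronglyMeasurable_exp_neg.neg
    (.of_forall fun y => by simpa only [norm_neg] using hβ.norm_exp_neg_le y)

variable [NullSingletonClass μ]

theorem mul_exp_neg_cauchyTransform_eq_ae (hβ : BoundedCauchyPotential μ β M)
    (hf : BoundedCauchyPotential μ f N)
    (hy : ∀ᵐ k ∂μ, Integrable (fun x => (β x * y x + f x) / (k - x)) μ ∧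
      y k = cauchyTransform μ (fun x => β x * y x + f x) k) :
    ∀ᵐ k ∂μ, y k * exp (-cauchyTransform μ β k) =
      cauchyTransform μ (fun x => f x * exp (-cauchyTransform μ β x)) k := by
  filter_upwards [hy] with k ⟨integrable_rhs, y_eq⟩
  have hg := hβ.mul_neg_exp_neg_cauchyTransform
  have product := cauchyTransform_mul_cauchyTransform hg integrable_rhs
  have cancel :
      cauchyTransform μ (fun x => (β x * y x + f x) *
          cauchyTransform μ (fun x => β x * -exp (-cauchyTransform μ β x)) x) k +
        cauchyTransform μ (fun x => β x * -exp (-cauchyTransform μ β x) *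
          cauchyTransform μ (fun x => β x * y x + f x) x) k =
      cauchyTransform μ (fun x => f x * exp (-cauchyTransform μ β x)) k -
        cauchyTransform μ (fun x => β x * y x + f x) k := by
    rw [cauchyTransform, cauchyTransform.eq_1 μ (fun x => _ * _ * _),
      ← integral_add (integrable_mul_cauchyTransform hg integrable_rhs)
        (integrable_mul_cauchyTransform_swap hg integrable_rhs),
      cauchyTransform.eq_1 _ _ k, cauchyTransform.eq_1 _ _ k,
      ← integral_sub ((hβ.mul_exp_neg_cauchyTransform hf).integrable k) integrable_rhs]
    refine integral_congr_ae (hy.mono fun x hx => ?_)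
    simp only [cauchyTransform_mul_neg_exp_neg hβ, ← hx.2]
    ring
  rw [cancel, ← y_eq, cauchyTransform_mul_neg_exp_neg hβ] at product
  linear_combination product

theorem norm_le_of_eq_cauchyTransform_mul_add (hβ : BoundedCauchyPotential μ β M)
    (hf : BoundedCauchyPotential μ f N)
    (hy : ∀ᵐ k ∂μ, Integrable (fun x => (β x * y x + f x) / (k - x)) μ ∧
      y k = cauchyTransform μ (fun x => β x * y x + f x) k) :
    ∀ᵐ k ∂μ, ‖y k‖ ≤ Real.exp (2 * M) * N := by
  filter_upwards [mul_exp_neg_cauchyTransform_eq_ae hβ hf hy] with k hk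
  have norm_exp_le : ‖exp (cauchyTransform μ β k)‖ ≤ Real.exp M :=
    (norm_exp_le_exp_norm _).trans (Real.exp_le_exp.2 (hβ.norm_cauchyTransform_le k))
  have norm_mul_le := (hβ.mul_exp_neg_cauchyTransform hf).norm_cauchyTransform_le k
  rw [NNReal.coe_mul, Real.coe_toNNReal _ (Real.exp_pos _).le, ← hk] at norm_mul_le
  calc ‖y k‖ = ‖y k * exp (-cauchyTransform μ β k)‖ * ‖exp (cauchyTransform μ β k)‖ := by
        rw [← norm_mul, mul_assoc, ← exp_add, neg_add_cancel, exp_zero, mul_one]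
    _ ≤ Real.exp M * N * Real.exp M := by gcongr
    _ = Real.exp (2 * M) * N := by rw [two_mul, Real.exp_add]; ring

theorem norm_le_of_eq_cauchyTransform_mul_conj_add (hB : BoundedCauchyPotential μ B M)
    (hf : BoundedCauchyPotential μ f N)
    (hy : ∀ᵐ k ∂μ, Integrable (fun x => (B x * starRingEnd ℂ (y x) + f x) / (k - x)) μ ∧
      y k = cauchyTransform μ (fun x => B x * starRingEnd ℂ (y x) + f x) k) :
    ∀ᵐ k ∂μ, ‖y k‖ ≤ Real.exp (2 * M) * N := by
  have y_measurable := (aestronglyMeasurable_of_ae_eq_cauchyTransform hy).aemeasurable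
  have hβ : BoundedCauchyPotential μ (fun x => B x * (starRingEnd ℂ (y x) / y x)) (1 * M) := by
    refine hB.mul ((continuous_conj.measurable.comp_aemeasurable y_measurable).div
      y_measurable).aestronglyMeasurable (.of_forall fun x => ?_)
    rw [norm_div, RCLike.norm_conj]
    exact div_self_le_one _
  have conj_eq (x : ℂ) : B x * (starRingEnd ℂ (y x) / y x) * y x = B x * starRingEnd ℂ (y x) := by
    rw [mul_assoc, div_mul_cancel_of_imp fun h => by rw [h, map_zero]]
  rw [one_mul] at hβ
  exact norm_le_of_eq_cauchyTransform_mul_add hβ hf (by simpa only [conj_eq] using hy)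

end SimilarityPrinciple

section ConjugateEquation

variable {B g v : ℂ → ℂ} {M K : ℝ≥0}

lemma BoundedCauchyPotential.mul_conj (hB : BoundedCauchyPotential μ B M)
    (hv : AEStronglyMeasurable v μ) (hK : ∀ᵐ x ∂μ, ‖v x‖ ≤ K) :
    BoundedCauchyPotential μ (fun x => B x * starRingEnd ℂ (v x)) (K * M) :=
  hB.mul (continuous_conj.comp_aestronglyMeasurable hv)
    (by simpa only [RCLike.norm_conj] using hK)

lemma BoundedCauchyPotential.mul_conj_lp_top (hB : BoundedCauchyPotential μ B M) (v : Lp ℂ ∞ μ) :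
    BoundedCauchyPotential μ (fun x => B x * starRingEnd ℂ (v x)) (‖v‖₊ * M) :=
  hB.mul_conj (Lp.aestronglyMeasurable v) (ae_norm_coeFn_le_norm_lp_top v)

variable [SFinite μ]

lemma BoundedCauchyPotential.memLp_top_cauchyTransform (hB : BoundedCauchyPotential μ B M) :
    MemLp (cauchyTransform μ B) ∞ μ :=
  memLp_top_of_bound hB.aestronglyMeasurable_cauchyTransform M
    (.of_forall hB.norm_cauchyTransform_le)

/-- The operator `v ↦ cauchyTransform μ (B * conj v)` on `L^∞(μ)`; conjugation makes it linear
over `ℝ` only. -/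
noncomputable def cauchyTransformMulConj (hB : BoundedCauchyPotential μ B M) :
    Lp ℂ ∞ μ →L[ℝ] Lp ℂ ∞ μ :=
  LinearMap.mkContinuous
    { toFun := fun v => (hB.mul_conj_lp_top v).memLp_top_cauchyTransform.toLp _
      map_add' := fun v w => by
        rw [← MemLp.toLp_add]
        refine MemLp.toLp_congr _ _ (.of_forall fun k => ?_)
        rw [Pi.add_apply, ← cauchyTransform_add ((hB.mul_conj_lp_top v).integrable k)
          ((hB.mul_conj_lp_top w).integrable k)]
        refine congrFun (cauchyTransform_congr_ae ?_) k
        filter_upwards [Lp.coeFn_add v w] with x hx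
        rw [hx, Pi.add_apply, map_add, mul_add]
      map_smul' := fun c v => by
        rw [RingHom.id_apply, ← MemLp.toLp_const_smul]
        refine MemLp.toLp_congr _ _ (.of_forall fun k => ?_)
        rw [Pi.smul_apply, real_smul, ← cauchyTransform_const_mul]
        refine congrFun (cauchyTransform_congr_ae ?_) k
        filter_upwards [Lp.coeFn_smul c v] with x hx
        rw [hx, Pi.smul_apply, real_smul, map_mul, conj_ofReal, mul_left_comm] }
    M fun v => by
      rw [mul_comm]
      refine norm_lp_top_le_of_ae_norm_le (C := ‖v‖₊ * M) ?_
      filter_upwards [(hB.mul_conj_lp_top v).memLp_top_cauchyTransform.coeFn_toLp] with k hk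
      rw [LinearMap.coe_mk, AddHom.coe_mk, hk]
      exact (hB.mul_conj_lp_top v).norm_cauchyTransform_le k

lemma coeFn_cauchyTransformMulConj (hB : BoundedCauchyPotential μ B M) (v : Lp ℂ ∞ μ) :
    cauchyTransformMulConj hB v =ᵐ[μ] cauchyTransform μ fun x => B x * starRingEnd ℂ (v x) :=
  (hB.mul_conj_lp_top v).memLp_top_cauchyTransform.coeFn_toLp

variable [NullSingletonClass μ]

lemma norm_le_of_eq_add_cauchyTransform_mul_conj (hB : BoundedCauchyPotential μ B M)
    (hg : AEStronglyMeasurable g μ) (hK : ∀ᵐ x ∂μ, ‖g x‖ ≤ K)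
    (hv : ∀ᵐ k ∂μ, Integrable (fun x => B x * starRingEnd ℂ (v x) / (k - x)) μ ∧
      v k = g k + cauchyTransform μ (fun x => B x * starRingEnd ℂ (v x)) k) :
    ∀ᵐ k ∂μ, ‖v k‖ ≤ (1 + Real.exp (2 * M) * M) * K := by
  have split (x : ℂ) : B x * starRingEnd ℂ (v x - g x) + B x * starRingEnd ℂ (g x) =
      B x * starRingEnd ℂ (v x) := by
    rw [← mul_add, ← map_add, sub_add_cancel]
  have difference_le := norm_le_of_eq_cauchyTransform_mul_conj_add (y := fun x => v x - g x) hB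
    (hB.mul_conj hg hK) (by
      simp only [split]
      exact hv.mono fun k hk => ⟨hk.1, sub_eq_iff_eq_add'.2 hk.2⟩)
  filter_upwards [difference_le, hK] with k hdiff hgk
  calc ‖v k‖ = ‖(v k - g k) + g k‖ := by rw [sub_add_cancel]
    _ ≤ Real.exp (2 * M) * (K * M : ℝ≥0) + K := (norm_add_le _ _).trans (add_le_add hdiff hgk)
    _ = (1 + Real.exp (2 * M) * M) * K := by rw [NNReal.coe_mul]; ring

lemma norm_le_mul_norm_sub_smul_cauchyTransformMulConj (hB : BoundedCauchyPotential μ B M)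
    {t : ℝ} (ht : t ∈ Set.Icc (0 : ℝ) 1) (v : Lp ℂ ∞ μ) :
    ‖v‖ ≤ (1 + (Real.exp (2 * M)).toNNReal * M : ℝ≥0) * ‖v - t • cauchyTransformMulConj hB v‖ := by
  set g := v - t • cauchyTransformMulConj hB v with g_def
  have hBt : BoundedCauchyPotential μ (fun x => B x * (t : ℂ)) (1 * M) :=
    hB.mul aestronglyMeasurable_const (.of_forall fun _ => by
      simpa [abs_of_nonneg ht.1] using ht.2)
  rw [one_mul] at hBt
  have move (x : ℂ) : B x * (t : ℂ) * starRingEnd ℂ (v x) = t * (B x * starRingEnd ℂ (v x)) := by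
    ring
  refine norm_lp_top_le_of_ae_norm_le
    (C := (1 + (Real.exp (2 * M)).toNNReal * M) * ‖g‖₊) ?_
  push_cast
  rw [Real.coe_toNNReal _ (Real.exp_pos _).le]
  refine norm_le_of_eq_add_cauchyTransform_mul_conj hBt (Lp.aestronglyMeasurable g)
    (ae_norm_coeFn_le_norm_lp_top g) ?_
  simp only [move, mul_div_assoc, cauchyTransform_const_mul]
  filter_upwards [Lp.coeFn_sub v (t • cauchyTransformMulConj hB v),
    Lp.coeFn_smul t (cauchyTransformMulConj hB v), coeFn_cauchyTransformMulConj hB v]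
    with k hsub hsmul hcoe
  refine ⟨by simpa only [mul_div_assoc] using
    ((hB.mul_conj_lp_top v).integrable k).const_mul (t : ℂ), ?_⟩
  rw [g_def, hsub, Pi.sub_apply, hsmul, Pi.smul_apply, hcoe, real_smul, sub_add_cancel]

theorem exists_eq_one_add_cauchyTransform_mul_conj (hB : BoundedCauchyPotential μ B M) :
    ∃ v : Lp ℂ ∞ μ, ∀ᵐ k ∂μ,
      v k = 1 + cauchyTransform μ (fun x => B x * starRingEnd ℂ (v x)) k := by
  have hone : MemLp (fun _ : ℂ => (1 : ℂ)) ∞ μ := memLp_top_const 1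
  obtain ⟨U, hU⟩ := isUnit_one_sub_of_forall_norm_le fun _ ht =>
    norm_le_mul_norm_sub_smul_cauchyTransformMulConj hB ht
  set v : Lp ℂ ∞ μ := (↑U⁻¹ : Lp ℂ ∞ μ →L[ℝ] Lp ℂ ∞ μ) (hone.toLp _)
  have v_sub : v - cauchyTransformMulConj hB v = hone.toLp _ := calc
    v - cauchyTransformMulConj hB v = (↑U : Lp ℂ ∞ μ →L[ℝ] Lp ℂ ∞ μ) v := by rw [hU]; rfl
    _ = (↑U * ↑U⁻¹ : Lp ℂ ∞ μ →L[ℝ] Lp ℂ ∞ μ) (hone.toLp _) := rfl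
    _ = hone.toLp _ := by rw [U.mul_inv]; rfl
  refine ⟨v, ?_⟩
  filter_upwards [Lp.coeFn_sub v (cauchyTransformMulConj hB v), coeFn_cauchyTransformMulConj hB v,
    hone.coeFn_toLp] with k hsub hcoe hk
  rw [v_sub, hk, Pi.sub_apply, hcoe] at hsub
  exact (add_eq_of_eq_sub hsub).symm

theorem exists_eq_cauchyTransform_mul_one_add_conj (hB : BoundedCauchyPotential μ B M) :
    ∃ u : ℂ → ℂ, MemLp u ∞ μ ∧
      ∀ k, Integrable (fun x => B x * (1 + starRingEnd ℂ (u x)) / (k - x)) μ ∧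
        u k = cauchyTransform μ (fun x => B x * (1 + starRingEnd ℂ (u x))) k := by
  obtain ⟨v, hv⟩ := exists_eq_one_add_cauchyTransform_mul_conj hB
  have hBv := hB.mul_conj_lp_top v
  have rhs_eq : (fun x => B x * starRingEnd ℂ (v x)) =ᵐ[μ] fun x =>
      B x * (1 + starRingEnd ℂ (cauchyTransform μ (fun y => B y * starRingEnd ℂ (v y)) x)) :=
    hv.mono fun x hx => by
      simpa only [map_add, map_one] using congrArg (fun z => B x * starRingEnd ℂ z) hx
  refine ⟨_, hBv.memLp_top_cauchyTransform, fun k => ⟨(hBv.integrable k).congr ?_, ?_⟩⟩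
  · exact rhs_eq.mono fun x hx => congrArg (· / (k - x)) hx
  · exact congrFun (cauchyTransform_congr_ae rhs_eq) k

theorem ae_eq_of_eq_cauchyTransform_mul_one_add_conj (hB : BoundedCauchyPotential μ B M)
    {u u' : ℂ → ℂ}
    (hu : ∀ᵐ k ∂μ, Integrable (fun x => B x * (1 + starRingEnd ℂ (u x)) / (k - x)) μ ∧
      u k = cauchyTransform μ (fun x => B x * (1 + starRingEnd ℂ (u x))) k)
    (hu' : ∀ᵐ k ∂μ, Integrable (fun x => B x * (1 + starRingEnd ℂ (u' x)) / (k - x)) μ ∧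
      u' k = cauchyTransform μ (fun x => B x * (1 + starRingEnd ℂ (u' x))) k) :
    u =ᵐ[μ] u' := by
  have zero_potential : BoundedCauchyPotential μ (fun _ => 0) 0 :=
    ⟨aestronglyMeasurable_const, fun k => by simp⟩
  have conj_sub (k x : ℂ) : (B x * starRingEnd ℂ (u x - u' x) + 0) / (k - x) =
      B x * (1 + starRingEnd ℂ (u x)) / (k - x) - B x * (1 + starRingEnd ℂ (u' x)) / (k - x) := by
    rw [map_sub]
    ring
  have difference_le := norm_le_of_eq_cauchyTransform_mul_conj_add
    (y := fun x => u x - u' x) hB zero_potential (by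
      filter_upwards [hu, hu'] with k ⟨integrable_u, u_eq⟩ ⟨integrable_u', u'_eq⟩
      simp only [cauchyTransform, conj_sub] at u_eq u'_eq ⊢
      exact ⟨integrable_u.sub integrable_u', by rw [integral_sub integrable_u integrable_u',
        ← u_eq, ← u'_eq]⟩)
  filter_upwards [difference_le] with k hk
  rw [NNReal.coe_zero, mul_zero] at hk
  exact sub_eq_zero.1 (norm_le_zero_iff.1 hk)

end ConjugateEquation

end CauchyTransform

section PlanarLebesgueMeasure

lemma lintegral_enorm_div_sub_le_rieszPotential (μ : Measure ℂ) (f : ℂ → ℂ) (k : ℂ) :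
    ∫⁻ y, ‖f y / (k - y)‖ₑ ∂μ ≤ rieszPotential μ 1 (fun y => ‖f y‖ₑ) k := by
  refine lintegral_mono fun y => ?_
  obtain hky | hky := eq_or_ne (k - y) 0
  · simp [hky]
  · simp [div_eq_mul_inv, enorm_inv hky, ENNReal.rpow_neg_one]

variable {f : ℂ → ℂ} {p q s : ℝ}

lemma lintegral_enorm_rpow_lt_top_iff_memLp (hf : AEStronglyMeasurable f) (hp : 0 < p) :
    ∫⁻ y, ‖f y‖ₑ ^ p < ∞ ↔ MemLp f (ENNReal.ofReal p) := by
  rw [MemLp, eLpNorm_lt_top_iff_lintegral_rpow_enorm_lt_top (by simpa using hp)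
    ENNReal.ofReal_ne_top, ENNReal.toReal_ofReal hp.le, and_iff_right hf]

theorem exists_boundedCauchyPotential_of_memLp (hp : 1 < p) (hp2 : p < 2) (hq : 2 < q)
    (hfp : MemLp f (ENNReal.ofReal p)) (hfq : MemLp f (ENNReal.ofReal q)) :
    ∃ M, BoundedCauchyPotential volume f M := by
  have two_lt_conj : 2 < p.conjExponent := by
    rw [Real.conjExponent, lt_div_iff₀ (by linarith)]
    linarith
  have conj_lt_two : q.conjExponent < 2 := by
    rw [Real.conjExponent, div_lt_iff₀ (by linarith)]
    linarith
  obtain ⟨M, hM⟩ := exists_rieszPotential_le (μ := (volume : Measure ℂ)) (a := 1)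
    (.conjExponent hp) (.conjExponent (one_lt_two.trans hq)) (by simpa using two_lt_conj)
    (by simpa using conj_lt_two) hfp.aestronglyMeasurable.enorm
    ((lintegral_enorm_rpow_lt_top_iff_memLp hfp.aestronglyMeasurable (by linarith)).2 hfp).ne
    ((lintegral_enorm_rpow_lt_top_iff_memLp hfq.aestronglyMeasurable (by linarith)).2 hfq).ne
  exact ⟨M, hfp.aestronglyMeasurable, fun k =>
    (lintegral_enorm_div_sub_le_rieszPotential volume f k).trans (hM k)⟩

theorem memLp_cauchyTransform (hp : 1 < p) (hs : 0 < s) (hps : p⁻¹ = 2⁻¹ + s⁻¹)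
    (hf : MemLp f (ENNReal.ofReal p)) :
    MemLp (cauchyTransform volume f) (ENNReal.ofReal s) := by
  have hp0 : 0 < p := one_pos.trans hp
  have p_lt_s : p < s := (inv_lt_inv₀ hs hp0).1 (by rw [hps]; linarith)
  have exponent : (1 : ℝ) = Module.finrank ℝ ℂ * (1 - p⁻¹ + s⁻¹) := by
    rw [finrank_real_complex, hps]
    push_cast
    ring
  refine (lintegral_enorm_rpow_lt_top_iff_memLp
    (aestronglyMeasurable_cauchyTransform hf.aestronglyMeasurable) hs).1 ?_
  refine (lintegral_mono fun k => ?_).trans_lt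
    (lintegral_rieszPotential_rpow_lt_top hp p_lt_s exponent hf.aestronglyMeasurable.enorm
      ((lintegral_enorm_rpow_lt_top_iff_memLp hf.aestronglyMeasurable hp0).2 hf).ne)
  gcongr
  exact (enorm_integral_le_lintegral_enorm _).trans
    (lintegral_enorm_div_sub_le_rieszPotential volume f k)

lemma memLp_of_eq_cauchyTransform_mul_one_add_conj {B u : ℂ → ℂ} (hp : 1 < p) (hs : 0 < s)
    (hps : p⁻¹ = 2⁻¹ + s⁻¹) (hB : MemLp B (ENNReal.ofReal p)) (hu : MemLp u ∞)
    (u_eq : ∀ k, u k = cauchyTransform volume (fun x => B x * (1 + starRingEnd ℂ (u x))) k) :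
    MemLp u (ENNReal.ofReal s) := by
  have conj_memLp : MemLp (fun x => starRingEnd ℂ (u x)) ∞ := hu.star
  have one_add_conj : MemLp (fun x => 1 + starRingEnd ℂ (u x)) ∞ :=
    (memLp_top_const (1 : ℂ)).add conj_memLp
  have rhs : MemLp (fun x => B x * (1 + starRingEnd ℂ (u x))) (ENNReal.ofReal p) :=
    one_add_conj.mul' hB
  exact (memLp_cauchyTransform hp hs hps rhs).ae_eq (.of_forall fun k => (u_eq k).symm)

end PlanarLebesgueMeasure

theorem integral_equation_unique_solvability_general {s : ℝ} (hs : 2 < s) {b : ℂ → ℂ} {M : ℝ≥0}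
    (hb : MemLp b (ENNReal.ofReal (2 * s / (s + 2))))
    (hM : BoundedCauchyPotential volume b M) :
    ∃ u : ℂ → ℂ, MemLp u (ENNReal.ofReal s) ∧
      (∀ k, Integrable (fun k' => b k' * (1 + starRingEnd ℂ (u k')) / (k - k')) ∧
        u k = 1 / (Real.pi : ℂ) * ∫ k', b k' * (1 + starRingEnd ℂ (u k')) / (k - k')) ∧
      ∀ u' : ℂ → ℂ,
        (∀ᵐ k, Integrable (fun k' => b k' * (1 + starRingEnd ℂ (u' k')) / (k - k')) ∧
          u' k = 1 / (Real.pi : ℂ) * ∫ k', b k' * (1 + starRingEnd ℂ (u' k')) / (k - k')) →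
        u' =ᵐ[volume] u := by
  have transform_eq (u : ℂ → ℂ) (k : ℂ) :
      1 / (Real.pi : ℂ) * ∫ k', b k' * (1 + starRingEnd ℂ (u k')) / (k - k') =
        cauchyTransform volume
          (fun k' => 1 / (Real.pi : ℂ) * b k' * (1 + starRingEnd ℂ (u k'))) k := by
    simp only [mul_assoc]
    exact (cauchyTransform_const_mul _ _ _).symm
  have integrable_iff (u : ℂ → ℂ) (k : ℂ) :
      Integrable (fun k' => b k' * (1 + starRingEnd ℂ (u k')) / (k - k')) ↔
        Integrable
          (fun k' => 1 / (Real.pi : ℂ) * b k' * (1 + starRingEnd ℂ (u k')) / (k - k')) := by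
    simp only [mul_assoc, mul_div_assoc]
    exact (integrable_const_mul_iff (by simp [Real.pi_ne_zero]) _).symm
  simp_rw [transform_eq, integrable_iff]
  have scaled_potential := hM.const_mul (1 / (Real.pi : ℂ))
  obtain ⟨u, u_bounded, hu⟩ := exists_eq_cauchyTransform_mul_one_add_conj scaled_potential
  refine ⟨u, ?_, hu, fun u' hu' =>
    ae_eq_of_eq_cauchyTransform_mul_one_add_conj scaled_potential hu' (.of_forall hu)⟩
  have one_lt_exponent : 1 < 2 * s / (s + 2) := by
    rw [lt_div_iff₀ (by linarith)]
    linarith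
  exact memLp_of_eq_cauchyTransform_mul_one_add_conj one_lt_exponent (by linarith)
    (by field_simp) (hb.const_mul _) u_bounded fun k => (hu k).2

/-- Unique solvability in `L^s(ℂ)` of the integral equation
`u = ∂̄_k⁻¹(b·(1 + conj u))` for `b ∈ L^{r₁} ∩ L^{r₂}`, `r₁ = 2s/(s+2)`, `r₂ > 2`. -/
theorem integral_equation_unique_solvability
    (s : ℝ) (hs : 2 < s) (r₁ : ℝ) (hr₁ : r₁ = 2 * s / (s + 2))
    (b : ℂ → ℂ) (hb₁ : MemLp b (ENNReal.ofReal r₁))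
    (hb₂ : ∃ r₂ : ℝ, 2 < r₂ ∧ MemLp b (ENNReal.ofReal r₂)) :
    ∃ u : ℂ → ℂ,
      (MemLp u (ENNReal.ofReal s) ∧
        ∀ᵐ k : ℂ,
          Integrable (fun k' => b k' * (1 + (starRingEnd ℂ) (u k')) / (k - k')) ∧
          u k = (1 / (Real.pi : ℂ)) *
            ∫ k', b k' * (1 + (starRingEnd ℂ) (u k')) / (k - k')) ∧
      ∀ u' : ℂ → ℂ,
        (MemLp u' (ENNReal.ofReal s) ∧
          ∀ᵐ k : ℂ,
            Integrable (fun k' => b k' * (1 + (starRingEnd ℂ) (u' k')) / (k - k')) ∧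
            u' k = (1 / (Real.pi : ℂ)) *
              ∫ k', b k' * (1 + (starRingEnd ℂ) (u' k')) / (k - k')) →
        u' =ᵐ[volume] u := by
  subst hr₁
  obtain ⟨r₂, hr₂, hb₂⟩ := hb₂
  obtain ⟨M, hM⟩ := exists_boundedCauchyPotential_of_memLp
    (by rw [lt_div_iff₀ (by linarith)]; linarith) (by rw [div_lt_iff₀ (by linarith)]; linarith)
    hr₂ hb₁ hb₂
  obtain ⟨u, u_memLp, hu, unique⟩ := integral_equation_unique_solvability_general hs hb₁ hM
  exact ⟨u, ⟨u_memLp, .of_forall hu⟩, fun u' hu' => unique u' hu'.2⟩
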